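/- Let (R,m) be a local ring and B an R-module with B/mB ≠ 0. Then the socle of R (the set of elements annihilated by m) is contained in the trace ideal tr_B(R). -/

import Mathlib

/-- The trace of `A` with respect to `B`: the submodule of `A` generated by the images
of all `R`-linear maps `B → A`. -/
def trace (R : Type) [CommRing R] (B A : Type) [AddCommGroup B] [Module R B]
    [AddCommGroup A] [Module R A] : Submodule R A :=
  ⨆ φ : B →ₗ[R] A, LinearMap.range φ

/-- `B` generates `D` if some direct sum of copies of `B` surjects onto `D`. -/
def Generates (R : Type) [CommRing R] (B D : Type) [AddCommGroup B] [Module R B]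
    [AddCommGroup D] [Module R D] : Prop :=
  ∃ (S : Type) (f : (S →₀ B) →ₗ[R] D), Function.Surjective f

/-!
Since `B / mB` is a nonzero vector space over `R / m`, it maps onto `R / m`, and hence so does `B`.
An element killed by `m` is the image of `1` under a linear map out of `R / m`; composing the two
maps puts it into the trace of `B`.
-/

section Trace

variable {R : Type} [CommRing R] {A B D : Type} [AddCommGroup A] [Module R A]
  [AddCommGroup B] [Module R B] [AddCommGroup D] [Module R D]

theorem range_le_trace (φ : B →ₗ[R] A) : LinearMap.range φ ≤ trace R B A :=
  le_iSup (fun ψ : B →ₗ[R] A ↦ LinearMap.range ψ) φ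

theorem trace_le_trace_of_surjective {f : B →ₗ[R] D} (hf : Function.Surjective f) :
    trace R D A ≤ trace R B A :=
  iSup_le fun φ ↦ calc
    LinearMap.range φ = LinearMap.range (φ ∘ₗ f) :=
      (LinearMap.range_comp_of_range_eq_top φ (LinearMap.range_eq_top.mpr hf)).symm
    _ ≤ trace R B A := range_le_trace (φ ∘ₗ f)

theorem torsionBySet_le_trace_quotient (I : Ideal R) :
    Submodule.torsionBySet R A I ≤ trace R (R ⧸ I) A := by
  intro x hx
  have hIx : I ≤ LinearMap.ker (LinearMap.toSpanSingleton R A x) := fun a ha ↦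
    (Submodule.mem_torsionBySet_iff _ x).mp hx ⟨a, ha⟩
  exact range_le_trace (I.liftQ _ hIx) ⟨Submodule.Quotient.mk 1, one_smul R x⟩

end Trace

theorem bot_colon_eq_torsionBySet {R : Type*} [CommRing R] (s : Set R) :
    (⊥ : Submodule R R).colon s = Submodule.torsionBySet R R s := by
  ext x
  simp [Submodule.mem_colon, Submodule.mem_torsionBySet_iff, mul_comm x]

theorem exists_surjective_quotient_of_smul_top_ne_top {R B : Type*} [CommRing R]
    [AddCommGroup B] [Module R B] {m : Ideal R} [m.IsMaximal]
    (hB : m • (⊤ : Submodule R B) ≠ ⊤) : ∃ f : B →ₗ[R] R ⧸ m, Function.Surjective f := by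
  let _ : Field (R ⧸ m) := Ideal.Quotient.field m
  have : Nontrivial (B ⧸ m • (⊤ : Submodule R B)) := Submodule.Quotient.nontrivial_iff.mpr hB
  obtain ⟨g, hg⟩ := exists_ne (0 : Module.Dual (R ⧸ m) (B ⧸ m • (⊤ : Submodule R B)))
  exact ⟨g.restrictScalars R ∘ₗ Submodule.mkQ _,
    (LinearMap.surjective_of_ne_zero hg).comp (Submodule.mkQ_surjective _)⟩

theorem stmt_16_general {R : Type} [CommRing R] {A B : Type} [AddCommGroup A] [Module R A]
    [AddCommGroup B] [Module R B] {m : Ideal R} [m.IsMaximal]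
    (hB : m • (⊤ : Submodule R B) ≠ ⊤) : Submodule.torsionBySet R A m ≤ trace R B A :=
  have ⟨_, hf⟩ := exists_surjective_quotient_of_smul_top_ne_top hB
  (torsionBySet_le_trace_quotient m).trans (trace_le_trace_of_surjective hf)

/-- If `(R,m)` is local and `B` is an `R`-module with `B/mB ≠ 0`, then
`soc(R) = (0 :_R m) ⊆ tr_B(R)`. -/
theorem stmt_16 (R : Type) [CommRing R] [IsLocalRing R]
    (B : Type) [AddCommGroup B] [Module R B]
    (hB : (IsLocalRing.maximalIdeal R) • (⊤ : Submodule R B) ≠ ⊤) :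
    (⊥ : Submodule R R).colon (IsLocalRing.maximalIdeal R) ≤ trace R B R :=
  (bot_colon_eq_torsionBySet _).trans_le (stmt_16_general hB)
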